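/- arXiv:1612.02638 — 2 statements merged into one kernel-verified Lean document; each statement's English description precedes it below -/
import Mathlib

section
/- Let m = 2l+1 be odd, let 𝓡 be an (n+1)×(n+1) normalized orthogonal matrix (block form [[1, 0ᵀ],[0, R]] with R orthogonal), let A be an order-m, dimension-(n+1) real symmetric tensor, and let B = 𝓡^m A. Then A is regularly decomposable if and only if B is regularly decomposable. -/
/-!
A regular vector has `u₀ ≠ 0`, so the row conditions of an odd-order regular decomposition amount to
the single equation `A = ∑ k, (u k 0)⁻¹ • (u k)^{⊗(2l+1)}`. The action of a matrix on tensors is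
linear and sends `u^{⊗m}` to `(M u)^{⊗m}`. An orthogonal `M` with `M 0 0 = 1` fixes both the zeroth
coordinate and the Euclidean norm of every vector, so `u ↦ M u` preserves regularity and the weights
`(u k 0)⁻¹`, and hence carries decompositions to decompositions. Its inverse `Mᵀ` is again such a
matrix, and the action is functorial, which gives the converse.
-/

open Finset Matrix

/-- Rank-one tensor `u^{⊗m}` with entries `u_{i₁}⋯u_{i_m}`. -/
def rankOne (n m : ℕ) (u : Fin (n+1) → ℝ) : (Fin m → Fin (n+1)) → ℝ :=
  fun i => ∏ j, u (i j)

/-- A vector `x ∈ ℝ^{n+1}` is regular if `x₀ ≠ 0` and `x₀² = x₁² + ⋯ + x_n²`. -/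
def IsRegularVec (n : ℕ) (x : Fin (n+1) → ℝ) : Prop :=
  x 0 ≠ 0 ∧ x 0 ^ 2 = ∑ i : Fin n, x i.succ ^ 2

/-- An order-`m`, dimension-`(n+1)` real tensor is symmetric if it is invariant
under permutations of its indices. -/
def IsSymmetricTensor (n m : ℕ) (A : (Fin m → Fin (n+1)) → ℝ) : Prop :=
  ∀ (σ : Equiv.Perm (Fin m)) (i : Fin m → Fin (n+1)), A (i ∘ σ) = A i

/-- `A • x^{⊗m} = Σ_{i₁,…,i_m} a_{i₁…i_m} x_{i₁}⋯x_{i_m}`. -/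
def tEval (n m : ℕ) (A : (Fin m → Fin (n+1)) → ℝ) (x : Fin (n+1) → ℝ) : ℝ :=
  ∑ i : Fin m → Fin (n+1), A i * ∏ j, x (i j)

/-- Inner product of two tensors: `A • B = Σ_{i₁,…,i_m} a_{i₁…i_m} b_{i₁…i_m}`. -/
def tDot (n m : ℕ) (A B : (Fin m → Fin (n+1)) → ℝ) : ℝ :=
  ∑ i : Fin m → Fin (n+1), A i * B i

/-- A tensor is completely decomposable if `A = Σ_{k=1}^r (u^{(k)})^{⊗m}`. -/
def CompletelyDecomposable (n m : ℕ) (A : (Fin m → Fin (n+1)) → ℝ) : Prop :=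
  ∃ (r : ℕ) (u : Fin r → Fin (n+1) → ℝ), A = ∑ k, rankOne n m (u k)

/-- An even-order tensor is regularly decomposable if `A = Σ_{k=1}^r (u^{(k)})^{⊗m}`
with all `u^{(k)}` regular vectors. -/
def RegDecompEven (n m : ℕ) (A : (Fin m → Fin (n+1)) → ℝ) : Prop :=
  ∃ (r : ℕ) (u : Fin r → Fin (n+1) → ℝ),
    (∀ k, IsRegularVec n (u k)) ∧ A = ∑ k, rankOne n m (u k)

/-- An odd-order (`m = 2l+1`) tensor is regularly decomposable if its 0-th row tensor
`A₀ = Σ_k (u^{(k)})^{⊗2l}` with all `u^{(k)}` regular, and its other row tensors are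
`A_i = Σ_k (u^{(k)}_i / u^{(k)}_0) (u^{(k)})^{⊗2l}`. -/
def RegDecompOdd (n l : ℕ) (A : (Fin (2*l+1) → Fin (n+1)) → ℝ) : Prop :=
  ∃ (r : ℕ) (u : Fin r → Fin (n+1) → ℝ),
    (∀ k, IsRegularVec n (u k)) ∧
    (∀ j : Fin (2*l) → Fin (n+1), A (Fin.cons 0 j) = ∑ k, rankOne n (2*l) (u k) j) ∧
    (∀ (i : Fin n) (j : Fin (2*l) → Fin (n+1)),
      A (Fin.cons i.succ j) = ∑ k, (u k i.succ / u k 0) * rankOne n (2*l) (u k) j)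

/-- The transformed tensor `𝓡^m A`, with entries
`b_{l₁…l_m} = Σ_{i₁,…,i_m} a_{i₁…i_m} r_{l₁i₁}⋯r_{l_m i_m}`. -/
def tTransform (n m : ℕ) (M : Matrix (Fin (n+1)) (Fin (n+1)) ℝ)
    (A : (Fin m → Fin (n+1)) → ℝ) : (Fin m → Fin (n+1)) → ℝ :=
  fun l => ∑ i : Fin m → Fin (n+1), A i * ∏ j, M (l j) (i j)

/-- A normalized orthogonal matrix: an `(n+1)×(n+1)` orthogonal matrix of block form
`[[1, 0ᵀ],[0, R]]` with `R` an `n×n` orthogonal matrix. -/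
def IsNormalizedOrthogonal (n : ℕ) (M : Matrix (Fin (n+1)) (Fin (n+1)) ℝ) : Prop :=
  M 0 0 = 1 ∧ (∀ i : Fin n, M 0 i.succ = 0 ∧ M i.succ 0 = 0) ∧
  ∃ R : Matrix (Fin n) (Fin n) ℝ, Rᵀ * R = 1 ∧ ∀ i j : Fin n, M i.succ j.succ = R i j

section Orthogonal

variable {ι κ R : Type*} [Fintype ι] [Fintype κ] [DecidableEq ι] [CommRing R]

lemma mulVec_dotProduct_mulVec_of_transpose_mul_self {M : Matrix κ ι R} (hM : Mᵀ * M = 1)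
    (x y : ι → R) : (M *ᵥ x) ⬝ᵥ (M *ᵥ y) = x ⬝ᵥ y := by
  rw [dotProduct_mulVec, ← mulVec_transpose, mulVec_mulVec, hM, one_mulVec]

variable [LinearOrder R] [IsStrictOrderedRing R]

lemma eq_single_of_dotProduct_self_eq_one {v : ι → R} {i : ι} (hv : v ⬝ᵥ v = 1) (hi : v i = 1) :
    v = Pi.single i 1 := by
  have hdist : (v - Pi.single i 1) ⬝ᵥ (v - Pi.single i 1) = 0 := by
    simp [sub_dotProduct, dotProduct_sub, hv, hi]
  exact sub_eq_zero.mp (dotProduct_self_eq_zero.mp hdist)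

lemma mulVec_apply_of_mem_orthogonalGroup {M : Matrix ι ι R} (hM : M ∈ orthogonalGroup ι R) {i : ι}
    (hi : M i i = 1) (x : ι → R) : (M *ᵥ x) i = x i := by
  have hrow_norm : M i ⬝ᵥ M i = 1 := by
    simpa [mul_apply, dotProduct] using congr_fun₂ ((mem_orthogonalGroup_iff _ _).mp hM) i i
  have hrow : M i = Pi.single i 1 := eq_single_of_dotProduct_self_eq_one hrow_norm hi
  rw [mulVec, hrow, single_one_dotProduct]

end Orthogonal

section Regular

variable {n : ℕ}

lemma isRegularVec_iff_dotProduct_self {x : Fin (n + 1) → ℝ} :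
    IsRegularVec n x ↔ x 0 ≠ 0 ∧ x ⬝ᵥ x = 2 * x 0 ^ 2 := by
  have hnorm : x ⬝ᵥ x = x 0 ^ 2 + ∑ i : Fin n, x i.succ ^ 2 := by
    simp only [dotProduct, Fin.sum_univ_succ, ← sq]
  rw [IsRegularVec, hnorm, two_mul, add_right_inj, eq_comm (a := x 0 ^ 2)]

lemma IsRegularVec.mulVec {M : Matrix (Fin (n + 1)) (Fin (n + 1)) ℝ}
    (hM : M ∈ orthogonalGroup (Fin (n + 1)) ℝ) (h00 : M 0 0 = 1) {x : Fin (n + 1) → ℝ}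
    (hx : IsRegularVec n x) : IsRegularVec n (M *ᵥ x) := by
  rw [isRegularVec_iff_dotProduct_self] at hx ⊢
  rwa [mulVec_apply_of_mem_orthogonalGroup hM h00,
    mulVec_dotProduct_mulVec_of_transpose_mul_self ((mem_orthogonalGroup_iff' _ _).mp hM)]

end Regular

section Transform

variable {n m : ℕ} (M N : Matrix (Fin (n + 1)) (Fin (n + 1)) ℝ)

lemma tTransform_sum_smul {κ : Type*} (s : Finset κ) (c : κ → ℝ)
    (T : κ → (Fin m → Fin (n + 1)) → ℝ) :
    tTransform n m M (∑ k ∈ s, c k • T k) = ∑ k ∈ s, c k • tTransform n m M (T k) := by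
  ext i
  simp only [tTransform, Finset.sum_apply, Pi.smul_apply, smul_eq_mul, sum_mul, mul_sum, mul_assoc]
  exact sum_comm

lemma tTransform_rankOne (u : Fin (n + 1) → ℝ) :
    tTransform n m M (rankOne n m u) = rankOne n m (M *ᵥ u) := by
  ext i
  simp only [tTransform, rankOne, mulVec, dotProduct, Fintype.prod_sum, ← prod_mul_distrib,
    mul_comm]

lemma tTransform_one (A : (Fin m → Fin (n + 1)) → ℝ) : tTransform n m 1 A = A := by
  ext i
  simp [tTransform, one_apply, Fintype.prod_ite_zero, ← funext_iff]

lemma tTransform_tTransform (A : (Fin m → Fin (n + 1)) → ℝ) :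
    tTransform n m M (tTransform n m N A) = tTransform n m (M * N) A := by
  have hprod (i p : Fin m → Fin (n + 1)) :
      ∏ j, (M * N) (i j) (p j) = ∑ q : Fin m → Fin (n + 1), ∏ j, M (i j) (q j) * N (q j) (p j) := by
    simp only [mul_apply, Fintype.prod_sum]
  ext i
  simp only [tTransform, hprod, sum_mul, mul_sum, prod_mul_distrib]
  rw [sum_comm]
  exact sum_congr rfl fun p _ => sum_congr rfl fun q _ => by ring

end Transform

section RegDecomp

variable {n l : ℕ}

lemma rankOne_cons (m : ℕ) (u : Fin (n + 1) → ℝ) (a : Fin (n + 1)) (j : Fin m → Fin (n + 1)) :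
    rankOne n (m + 1) u (Fin.cons a j) = u a * rankOne n m u j := by
  simp only [rankOne, Fin.prod_univ_succ, Fin.cons_zero, Fin.cons_succ]

lemma regDecompOdd_iff_exists_eq_sum_smul_rankOne {A : (Fin (2 * l + 1) → Fin (n + 1)) → ℝ} :
    RegDecompOdd n l A ↔ ∃ (r : ℕ) (u : Fin r → Fin (n + 1) → ℝ),
      (∀ k, IsRegularVec n (u k)) ∧ A = ∑ k, (u k 0)⁻¹ • rankOne n (2 * l + 1) (u k) := by
  refine exists_congr fun r => exists_congr fun u => and_congr_right fun hu => ?_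
  have hrow (a : Fin (n + 1)) (j : Fin (2 * l) → Fin (n + 1)) :
      (∑ k, (u k 0)⁻¹ • rankOne n (2 * l + 1) (u k)) (Fin.cons a j) =
        ∑ k, u k a / u k 0 * rankOne n (2 * l) (u k) j := by
    simp only [Finset.sum_apply, Pi.smul_apply, smul_eq_mul, rankOne_cons, div_eq_inv_mul,
      mul_assoc]
  have hweight (k : Fin r) : u k 0 / u k 0 = 1 := div_self (hu k).1
  simp only [funext_iff, Fin.forall_fin_succ_pi, Fin.forall_fin_succ, hrow, hweight, one_mul]

protected lemma RegDecompOdd.tTransform {M : Matrix (Fin (n + 1)) (Fin (n + 1)) ℝ}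
    (hM : M ∈ orthogonalGroup (Fin (n + 1)) ℝ) (h00 : M 0 0 = 1)
    {A : (Fin (2 * l + 1) → Fin (n + 1)) → ℝ} (hA : RegDecompOdd n l A) :
    RegDecompOdd n l (tTransform n (2 * l + 1) M A) := by
  rw [regDecompOdd_iff_exists_eq_sum_smul_rankOne] at hA ⊢
  obtain ⟨r, u, hu, rfl⟩ := hA
  refine ⟨r, fun k => M *ᵥ u k, fun k => (hu k).mulVec hM h00, ?_⟩
  simp only [tTransform_sum_smul, tTransform_rankOne, mulVec_apply_of_mem_orthogonalGroup hM h00]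

end RegDecomp

theorem statement_11_general {n l : ℕ} {M : Matrix (Fin (n + 1)) (Fin (n + 1)) ℝ}
    (hM : M ∈ orthogonalGroup (Fin (n + 1)) ℝ) (h00 : M 0 0 = 1)
    (A : (Fin (2 * l + 1) → Fin (n + 1)) → ℝ) :
    RegDecompOdd n l A ↔ RegDecompOdd n l (tTransform n (2 * l + 1) M A) := by
  refine ⟨fun hA => hA.tTransform hM h00, fun hB => ?_⟩
  have hMt : Mᵀ ∈ orthogonalGroup (Fin (n + 1)) ℝ := by
    rwa [mem_orthogonalGroup_iff, transpose_transpose, ← mem_orthogonalGroup_iff']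
  have hinv : tTransform n (2 * l + 1) Mᵀ (tTransform n (2 * l + 1) M A) = A := by
    rw [tTransform_tTransform, (mem_orthogonalGroup_iff' _ _).mp hM, tTransform_one]
  exact hinv ▸ hB.tTransform hMt h00

/-- for odd `m = 2l+1`, a normalized orthogonal matrix `𝓡`, a symmetric
tensor `A` and `B = 𝓡^m A`: `A` is regularly decomposable iff `B` is. -/
theorem statement_11 (n l : ℕ)
    (M : Matrix (Fin (n+1)) (Fin (n+1)) ℝ)
    (hM : Mᵀ * M = 1) (hMn : IsNormalizedOrthogonal n M)
    (A : (Fin (2*l+1) → Fin (n+1)) → ℝ) (hsym : IsSymmetricTensor n (2*l+1) A)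
    (B : (Fin (2*l+1) → Fin (n+1)) → ℝ) (hB : B = tTransform n (2*l+1) M A) :
    RegDecompOdd n l A ↔ RegDecompOdd n l B := by
  subst hB
  exact statement_11_general ((mem_orthogonalGroup_iff' _ _).mpr hM) hMn.1 A
end

section
/- Let m be even. The set RD_{m,n+1} of all regularly decomposable order-m, dimension-(n+1) real symmetric tensors is a closed subset of the space of order-m, dimension-(n+1) symmetric tensors: if A^{(1)}, A^{(2)}, … is a sequence of regularly decomposable tensors converging (entrywise) to a tensor A, then A is regularly decomposable. -/
/-!
For even `m > 0`, a regular vector `u` satisfies `u^{⊗m} = u₀^m (u / u₀)^{⊗m}` with `u₀^m > 0`, and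
conversely a positive weight `t` in front of `v^{⊗m}` is absorbed by scaling `v` with the `m`-th
root of `t`. Hence the regularly decomposable tensors form the convex cone generated by the compact
set of all `v^{⊗m}` with `v` regular and `v₀ = 1`. The `(0,…,0)` entry `f` is a linear functional
equal to `1` on these generators. In finite dimension, a cone generated by a compact set on which
some linear functional `f` is positive is closed: the convex hull `K` of the generators is compact
by Carathéodory's theorem, and the cone is the projection along `K` of the closed set of pairs
`(x, c)` with `c ∈ K`, `0 ≤ f x` and `f c • x = f x • c`.

For `m = 0` a tensor is a single number and every rank-one tensor is `1`, so the regularly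
decomposable tensors correspond to a set of natural numbers, and every such set is closed in `ℝ`.
-/

open Finset Matrix

section CompactlyGeneratedCone

open scoped Pointwise

variable {E : Type*} [AddCommGroup E]

lemma convexHull_eq_biUnion_image_stdSimplex {𝕜 : Type*} [Field 𝕜] [LinearOrder 𝕜]
    [IsStrictOrderedRing 𝕜] [Module 𝕜 E] [FiniteDimensional 𝕜 E] (s : Set E) :
    convexHull 𝕜 s = ⋃ k ∈ Set.Iic (Module.finrank 𝕜 E + 1),
      (fun p : (Fin k → 𝕜) × (Fin k → E) => ∑ i, p.1 i • p.2 i) ''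
        (stdSimplex 𝕜 (Fin k) ×ˢ Set.univ.pi fun _ => s) := by
  apply Set.Subset.antisymm
  · intro x hx
    obtain ⟨ι, _, z, w, hzs, hz, hw, hw1, rfl⟩ := eq_pos_convex_span_of_mem_convexHull hx
    have hcard : Fintype.card ι ≤ Module.finrank 𝕜 E + 1 :=
      hz.card_le_finrank_succ.trans (Nat.succ_le_succ (Submodule.finrank_le _))
    let e := (Fintype.equivFin ι).symm
    refine Set.mem_biUnion hcard ⟨(w ∘ e, z ∘ e), ⟨⟨fun i => (hw _).le, ?_⟩, ?_⟩, ?_⟩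
    · exact (Equiv.sum_comp e w).trans hw1
    · exact fun i _ => hzs ⟨e i, rfl⟩
    · exact Equiv.sum_comp e fun i => w i • z i
  · refine Set.iUnion₂_subset fun k _ => ?_
    rintro _ ⟨⟨w, z⟩, ⟨⟨hw, hw1⟩, hz⟩, rfl⟩
    exact (convex_convexHull 𝕜 s).sum_mem (fun i _ => hw i) hw1
      fun i _ => subset_convexHull 𝕜 s (hz i trivial)

lemma coe_hull_eq_Ici_smul_convexHull {𝕜 : Type*} [Field 𝕜] [LinearOrder 𝕜]
    [IsStrictOrderedRing 𝕜] [Module 𝕜 E] {s : Set E} (hs : s.Nonempty) :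
    (PointedCone.hull 𝕜 s : Set E) = Set.Ici (0 : 𝕜) • convexHull 𝕜 s := by
  apply Set.Subset.antisymm
  · intro x hx
    induction hx using Submodule.span_induction with
    | mem x hx => exact ⟨1, zero_le_one, x, subset_convexHull 𝕜 s hx, one_smul 𝕜 x⟩
    | zero =>
      obtain ⟨c, hc⟩ := hs
      exact ⟨0, le_rfl, c, subset_convexHull 𝕜 s hc, zero_smul 𝕜 c⟩
    | add x y _ _ hx hy =>
      obtain ⟨a, ha, c, hc, rfl⟩ := hx
      obtain ⟨b, hb, d, hd, rfl⟩ := hy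
      have hsum : a • c + b • d ∈ (a + b) • convexHull 𝕜 s := by
        rw [(convex_convexHull 𝕜 s).add_smul ha hb]
        exact Set.add_mem_add (Set.smul_mem_smul_set hc) (Set.smul_mem_smul_set hd)
      exact Set.smul_set_subset_smul (add_nonneg ha hb) hsum
    | smul r x _ hx =>
      obtain ⟨a, ha, c, hc, rfl⟩ := hx
      exact ⟨r * a, mul_nonneg r.2 ha, c, hc, mul_smul (r : 𝕜) a c⟩
  · rintro _ ⟨t, ht, c, hc, rfl⟩
    exact PointedCone.smul_mem _ ht
      (convexHull_min PointedCone.subset_hull (PointedCone.convex _) hc)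

variable [Module ℝ E] [TopologicalSpace E] [ContinuousSMul ℝ E]

lemma isCompact_convexHull [ContinuousAdd E] [FiniteDimensional ℝ E] {s : Set E}
    (hs : IsCompact s) : IsCompact (convexHull ℝ s) := by
  rw [convexHull_eq_biUnion_image_stdSimplex]
  refine (Set.finite_Iic _).isCompact_biUnion fun k _ => ?_
  exact ((isCompact_stdSimplex ℝ (Fin k)).prod (isCompact_univ_pi fun _ => hs)).image (by fun_prop)

lemma isClosed_Ici_smul_of_isCompact [T2Space E] {K : Set E} (hK : IsCompact K) (f : E →L[ℝ] ℝ)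
    (hf : ∀ c ∈ K, 0 < f c) : IsClosed (Set.Ici (0 : ℝ) • K) := by
  have hproj : Set.Ici (0 : ℝ) • K =
      Prod.fst '' {p : E × K | 0 ≤ f p.1 ∧ f p.2 • p.1 = f p.1 • (p.2 : E)} := by
    ext x
    constructor
    · rintro ⟨t, ht, c, hc, rfl⟩
      refine ⟨(t • c, ⟨c, hc⟩), ⟨?_, ?_⟩, rfl⟩
      · simpa using mul_nonneg ht (hf c hc).le
      · simp [smul_smul, mul_comm]
    · rintro ⟨⟨x, c, hc⟩, ⟨hx, hxc⟩, rfl⟩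
      refine ⟨(f c)⁻¹ * f x, mul_nonneg (inv_nonneg.2 (hf c hc).le) hx, c, hc, ?_⟩
      simpa [mul_smul, ← hxc] using inv_smul_smul₀ (hf c hc).ne' x
  have : CompactSpace K := isCompact_iff_compactSpace.1 hK
  rw [hproj]
  refine isClosedMap_fst_of_compactSpace _ (IsClosed.and ?_ ?_)
  · exact isClosed_le (by fun_prop) (by fun_prop)
  · exact isClosed_eq (by fun_prop) (by fun_prop)

lemma isClosed_hull_of_isCompact [ContinuousAdd E] [T2Space E] [FiniteDimensional ℝ E] {s : Set E}
    (hs : IsCompact s) (f : E →L[ℝ] ℝ) (hf : ∀ c ∈ s, 0 < f c) :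
    IsClosed (PointedCone.hull ℝ s : Set E) := by
  rcases s.eq_empty_or_nonempty with rfl | hne
  · simp
  · rw [coe_hull_eq_Ici_smul_convexHull hne]
    have hf' : convexHull ℝ s ⊆ {c | 0 < f c} :=
      convexHull_min hf (convex_halfSpace_gt f.toLinearMap.isLinear 0)
    exact isClosed_Ici_smul_of_isCompact (isCompact_convexHull hs) f fun c hc => hf' hc

end CompactlyGeneratedCone

section RegularDecomposition

variable {n m : ℕ}

lemma rankOne_smul (a : ℝ) (u : Fin (n + 1) → ℝ) :
    rankOne n m (a • u) = a ^ m • rankOne n m u := by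
  ext i
  simp [rankOne, Finset.prod_mul_distrib]

lemma continuous_rankOne : Continuous (rankOne n m) := by
  unfold rankOne
  fun_prop

lemma IsRegularVec.smul {u : Fin (n + 1) → ℝ} (hu : IsRegularVec n u) {a : ℝ} (ha : a ≠ 0) :
    IsRegularVec n (a • u) := by
  refine ⟨mul_ne_zero ha hu.1, ?_⟩
  simp only [Pi.smul_apply, smul_eq_mul, mul_pow, hu.2, Finset.mul_sum]

lemma IsRegularVec.abs_le {u : Fin (n + 1) → ℝ} (hu : IsRegularVec n u) (i : Fin (n + 1)) :
    |u i| ≤ |u 0| := by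
  cases i using Fin.cases with
  | zero => exact le_rfl
  | succ j =>
    rw [← sq_le_sq, hu.2]
    exact Finset.single_le_sum (f := fun j : Fin n => u j.succ ^ 2)
      (fun _ _ => sq_nonneg _) (Finset.mem_univ j)

/-- The regular vectors with zeroth coordinate `1`, which represent the regular vectors up to
nonzero scalars. -/
def normalizedRegularVecs (n : ℕ) : Set (Fin (n + 1) → ℝ) :=
  {v | IsRegularVec n v ∧ v 0 = 1}

lemma IsRegularVec.inv_smul_mem_normalizedRegularVecs {u : Fin (n + 1) → ℝ}
    (hu : IsRegularVec n u) : (u 0)⁻¹ • u ∈ normalizedRegularVecs n :=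
  ⟨hu.smul (inv_ne_zero hu.1), inv_mul_cancel₀ hu.1⟩

lemma isCompact_normalizedRegularVecs (n : ℕ) : IsCompact (normalizedRegularVecs n) := by
  have hclosed : IsClosed (normalizedRegularVecs n) := by
    have heq : normalizedRegularVecs n =
        {v | v 0 ^ 2 = ∑ i : Fin n, v i.succ ^ 2} ∩ {v | v 0 = 1} := by
      ext v
      refine and_congr_left fun h0 => and_iff_right ?_
      exact ne_of_eq_of_ne h0 one_ne_zero
    rw [heq]
    exact (isClosed_eq (by fun_prop) (by fun_prop)).inter (isClosed_eq (by fun_prop) (by fun_prop))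
  refine (isCompact_Icc (a := fun _ => -1) (b := fun _ => 1)).of_isClosed_subset hclosed ?_
  rintro v ⟨hv, h0⟩
  have hbound : ∀ i, |v i| ≤ 1 := by simpa [h0] using hv.abs_le
  exact ⟨fun i => (abs_le.1 (hbound i)).1, fun i => (abs_le.1 (hbound i)).2⟩

lemma IsRegularVec.regDecompEven_rankOne {u : Fin (n + 1) → ℝ} (hu : IsRegularVec n u) :
    RegDecompEven n m (rankOne n m u) :=
  ⟨1, fun _ => u, fun _ => hu, by simp⟩

namespace RegDecompEven

lemma zero : RegDecompEven n m 0 :=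
  ⟨0, Fin.elim0, fun k => k.elim0, by simp⟩

variable {A B : (Fin m → Fin (n + 1)) → ℝ}

lemma add (hA : RegDecompEven n m A) (hB : RegDecompEven n m B) : RegDecompEven n m (A + B) := by
  obtain ⟨r, u, hu, rfl⟩ := hA
  obtain ⟨s, v, hv, rfl⟩ := hB
  refine ⟨r + s, Fin.append u v, fun k => ?_, by simp [Fin.sum_univ_add]⟩
  cases k using Fin.addCases with
  | left i => simpa using hu i
  | right j => simpa using hv j

lemma smul (hA : RegDecompEven n m A) (hm : m ≠ 0) {t : ℝ} (ht : 0 ≤ t) :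
    RegDecompEven n m (t • A) := by
  rcases ht.eq_or_lt with rfl | ht
  · simpa using zero
  · obtain ⟨r, u, hu, rfl⟩ := hA
    have hroot : 0 < t ^ (m : ℝ)⁻¹ := Real.rpow_pos_of_pos ht _
    refine ⟨r, fun k => t ^ (m : ℝ)⁻¹ • u k, fun k => (hu k).smul hroot.ne', ?_⟩
    simp only [rankOne_smul, Real.rpow_inv_natCast_pow ht.le hm, Finset.smul_sum]

end RegDecompEven

lemma regDecompEven_iff_mem_hull (hm : Even m) (hm0 : m ≠ 0) {A : (Fin m → Fin (n + 1)) → ℝ} :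
    RegDecompEven n m A ↔ A ∈ PointedCone.hull ℝ (rankOne n m '' normalizedRegularVecs n) := by
  constructor
  · rintro ⟨r, u, hu, rfl⟩
    refine Submodule.sum_mem _ fun k _ => ?_
    have hk : rankOne n m (u k) = u k 0 ^ m • rankOne n m ((u k 0)⁻¹ • u k) := by
      rw [← rankOne_smul, smul_inv_smul₀ (hu k).1]
    rw [hk]
    exact PointedCone.smul_mem _ (hm.pow_nonneg _) (PointedCone.subset_hull
      (Set.mem_image_of_mem _ (hu k).inv_smul_mem_normalizedRegularVecs))
  · intro hA
    induction hA using Submodule.span_induction with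
    | mem _ hA =>
      obtain ⟨v, hv, rfl⟩ := hA
      exact hv.1.regDecompEven_rankOne
    | zero => exact .zero
    | add _ _ _ _ hA hB => exact hA.add hB
    | smul t _ _ hA => exact hA.smul hm0 t.2

lemma isClosed_setOfPred_regDecompEven_order_zero (n : ℕ) :
    IsClosed {A | RegDecompEven n 0 A} := by
  have hpreimage : {A | RegDecompEven n 0 A} = (fun A => A default) ⁻¹'
      (((↑) : ℕ → ℝ) '' {r | RegDecompEven n 0 fun _ => (r : ℝ)}) := by
    ext A
    have hconst : A = fun _ => A default := funext fun i => congrArg A (Subsingleton.elim i _)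
    constructor
    · intro hA
      obtain ⟨r, u, -, hr⟩ := id hA
      have hAr : A default = r := by simp [hr, rankOne]
      refine ⟨r, ?_, hAr.symm⟩
      rwa [Set.mem_ofPred_eq, ← hAr, ← hconst]
    · rintro ⟨r, hr, hAr : (r : ℝ) = A default⟩
      rwa [Set.mem_ofPred_eq, hAr, ← hconst] at hr
  rw [hpreimage]
  exact (Nat.isClosedEmbedding_coe_real.isClosedMap _ (isClosed_discrete _)).preimage
    (continuous_apply _)

lemma isClosed_setOfPred_regDecompEven (n : ℕ) (hm : Even m) :
    IsClosed {A | RegDecompEven n m A} := by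
  rcases eq_or_ne m 0 with rfl | hm0
  · exact isClosed_setOfPred_regDecompEven_order_zero n
  · simp only [regDecompEven_iff_mem_hull hm hm0]
    refine isClosed_hull_of_isCompact
      ((isCompact_normalizedRegularVecs n).image continuous_rankOne)
      (ContinuousLinearMap.proj fun _ => 0) ?_
    rintro _ ⟨v, hv, rfl⟩
    simp [rankOne, hv.2]

end RegularDecomposition

/-- for even `m`, the set of regularly decomposable tensors is closed:
an entrywise limit of regularly decomposable tensors is regularly decomposable. -/
theorem statement_17 (n m : ℕ) (hm : Even m)
    (A : ℕ → (Fin m → Fin (n+1)) → ℝ)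
    (hA : ∀ q, RegDecompEven n m (A q))
    (L : (Fin m → Fin (n+1)) → ℝ)
    (hconv : ∀ i : Fin m → Fin (n+1),
      Filter.Tendsto (fun q => A q i) Filter.atTop (nhds (L i))) :
    RegDecompEven n m L := by
  have hAL : Filter.Tendsto A Filter.atTop (nhds L) := tendsto_pi_nhds.2 hconv
  exact (isClosed_setOfPred_regDecompEven n hm).mem_of_tendsto hAL (.of_forall hA)
end
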